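/- arXiv:math/0612233 — 2 statements merged into one kernel-verified Lean document; each statement's English description precedes it below -/
import Mathlib

section
/- Fix real constants r > 0, δ ≥ 0, Δ ≥ δ, c with 1 < c < 2, and suppose r < 1/(5c² + 2) and r ≤ 1/(6c³). Consider any x₀ = (x₁(0), x₂(0)) ∈ ℝ², any Lebesgue measurable locally bounded inputs d₁ : [0, ∞) → [δ, Δ], d₂ : [0, ∞) → [−1, 1], d̃ : [0, ∞) → [0, ∞), v : [0, ∞) → ℝ, any sequence of sampling times τ₀ = 0, τ_{i+1} = τ_i + r·exp(−d̃(τ_i)), and any function x = (x₁, x₂) : [0, ∞) → ℝ² with x(0) = x₀ which is absolutely continuous on each interval [τ_i, τ_{i+1}] and satisfies, for almost every t ∈ [τ_i, τ_{i+1}), ẋ₁(t) = −2x₁(t) − d₁(t)x₁(t)³ + x₂(t) and ẋ₂(t) = d₂(t)x₂(t)² − x₂(t)³ − 2x₂(τ_i) + v(t). Then there exists a function σ of class KL, depending only on r, δ, Δ, c (not on x₀, d₁, d₂, d̃, v), such that |x(t)| ≤ σ(|x₀|, t) + 2√2 · sup_{0 ≤ τ ≤ t} |v(τ)| for all t ≥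 0. -/
/-- A function `γ : [0,∞) → [0,∞)` is of class `K` if it is continuous,
strictly increasing and `γ 0 = 0`. -/
def ClassK (γ : ℝ → ℝ) : Prop :=
  ContinuousOn γ (Set.Ici 0) ∧ StrictMonoOn γ (Set.Ici 0) ∧ γ 0 = 0

/-- A function `σ : [0,∞) × [0,∞) → [0,∞)` is of class `KL` if it is continuous,
for each fixed `t ≥ 0` the map `s ↦ σ s t` is of class `K`, and for each fixed `s ≥ 0`
the map `t ↦ σ s t` is non-increasing with `σ s t → 0` as `t → +∞`. -/
def ClassKL (σ : ℝ → ℝ → ℝ) : Prop :=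
  ContinuousOn (fun p : ℝ × ℝ => σ p.1 p.2) (Set.Ici 0 ×ˢ Set.Ici 0) ∧
  (∀ t ∈ Set.Ici (0:ℝ), ClassK (fun s => σ s t)) ∧
  (∀ s ∈ Set.Ici (0:ℝ), AntitoneOn (σ s) (Set.Ici 0) ∧
    Filter.Tendsto (σ s) Filter.atTop (nhds 0)) ∧
  (∀ s ∈ Set.Ici (0:ℝ), ∀ t ∈ Set.Ici (0:ℝ), 0 ≤ σ s t)

/-- Absolute continuity of `y` on the interval `[a, b]`. -/
def AbsContOn {E : Type*} [NormedAddCommGroup E] (y : ℝ → E) (a b : ℝ) : Prop :=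
  ∀ ε > (0:ℝ), ∃ δ > (0:ℝ), ∀ n : ℕ, ∀ s t : ℕ → ℝ,
    (∀ i < n, a ≤ s i ∧ s i ≤ t i ∧ t i ≤ b) →
    (∀ i, i + 1 < n → t i ≤ s (i + 1)) →
    (∑ i ∈ Finset.range n, (t i - s i)) < δ →
    (∑ i ∈ Finset.range n, ‖y (t i) - y (s i)‖) < ε

section

open Set MeasureTheory

theorem aux_ordered (a b : ℕ → ℝ) (F : Finset ℕ) : (∀ j ∈ F, a j < b j) →
    (∀ i ∈ F, ∀ j ∈ F, i ≠ j → Disjoint (Ioc (a i) (b i)) (Ioc (a j) (b j))) →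
    ∃ (n : ℕ) (s t : ℕ → ℝ), (∀ i < n, ∃ j ∈ F, s i = a j ∧ t i = b j) ∧
      (∀ i, i + 1 < n → t i ≤ s (i + 1)) ∧
      ∀ g : ℝ → ℝ → ℝ, ∑ i ∈ Finset.range n, g (s i) (t i) = ∑ j ∈ F, g (a j) (b j) := by
  induction F using Finset.induction_on_max_value a with
  | empty =>
    intro _ _
    exact ⟨0, fun _ => 0, fun _ => 0, by simp, by simp, by simp⟩
  | insert k F hk hmax ih =>
    intro hlt hdis
    obtain ⟨n, s, t, h1, h2, h3⟩ := ih (fun j hj => hlt j (Finset.mem_insert_of_mem hj))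
      (fun i hi j hj => hdis i (Finset.mem_insert_of_mem hi) j (Finset.mem_insert_of_mem hj))
    refine ⟨n + 1, fun i => if i = n then a k else s i, fun i => if i = n then b k else t i,
      ?_, ?_, ?_⟩
    · intro i hi
      by_cases h : i = n
      · exact ⟨k, Finset.mem_insert_self _ _, by simp [h], by simp [h]⟩
      · obtain ⟨j, hj, hs, ht⟩ := h1 i (by omega)
        exact ⟨j, Finset.mem_insert_of_mem hj, by simp [h, hs], by simp [h, ht]⟩
    · intro i hi
      have hin : i ≠ n := by omega
      by_cases h : i + 1 = n
      · obtain ⟨j, hj, hs, ht⟩ := h1 i (by omega)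
        simp only [hin, h, if_true, if_false, ht]
        have hd := hdis j (Finset.mem_insert_of_mem hj) k (Finset.mem_insert_self _ _)
          (by rintro rfl; exact hk hj)
        rw [Ioc_disjoint_Ioc, max_eq_right (hmax j hj)] at hd
        have hl := hlt k (Finset.mem_insert_self _ _)
        rcases min_le_iff.1 hd with h | h
        · exact h
        · linarith
      · simp only [hin, h, if_false]
        exact h2 i (by omega)
    · intro g
      rw [Finset.sum_range_succ, Finset.sum_insert hk, ← h3 g]
      have : ∑ i ∈ Finset.range n, g (if i = n then a k else s i) (if i = n then b k else t i)
          = ∑ i ∈ Finset.range n, g (s i) (t i) := by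
        apply Finset.sum_congr rfl
        intro i hi
        have : i ≠ n := (Finset.mem_range.1 hi).ne
        simp [this]
      rw [this]
      simp [add_comm]

theorem aux_ac {E : Type*} [NormedAddCommGroup E] (y : ℝ → E) (f : ℝ → ℝ)
    (hfy : ∀ s t, |f t - f s| ≤ ‖y t - y s‖) (a b : ℝ) (hab : a ≤ b)
    (h : AbsContOn y a b) : AbsolutelyContinuousOnInterval f a b := by
  rw [absolutelyContinuousOnInterval_iff]
  intro ε hε
  obtain ⟨d, hd, H⟩ := h ε hε
  refine ⟨d, hd, ?_⟩
  rintro ⟨n, I⟩ ⟨hI1, hI2⟩ hlen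
  simp only at hI1 hI2 hlen ⊢
  set A : ℕ → ℝ := fun i => min (I i).1 (I i).2 with hA
  set B : ℕ → ℝ := fun i => max (I i).1 (I i).2 with hB
  obtain ⟨m, s, t, h1, h2, h3⟩ := aux_ordered A B ((Finset.range n).filter (fun i => A i < B i))
    (fun j hj => (Finset.mem_filter.1 hj).2)
    (fun i hi j hj hij => hI2 (Finset.mem_coe.2 (Finset.mem_filter.1 hi).1)
      (Finset.mem_coe.2 (Finset.mem_filter.1 hj).1) hij)
  have key : ∀ g : ℝ → ℝ → ℝ, (∀ z, g z z = 0) →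
      ∑ i ∈ Finset.range m, g (s i) (t i) = ∑ i ∈ Finset.range n, g (A i) (B i) := by
    intro g hg
    rw [h3 g, Finset.sum_filter]
    apply Finset.sum_congr rfl
    intro i _
    split_ifs with h
    · rfl
    · have : A i = B i := le_antisymm min_le_max (not_lt.1 h)
      rw [this, hg]
  have e1 : ∀ i, B i - A i = dist (I i).1 (I i).2 := by
    intro i
    rw [Real.dist_eq]; exact max_sub_min_eq_abs' _ _
  have e2 : ∀ i, dist (f (I i).1) (f (I i).2) ≤ ‖y (B i) - y (A i)‖ := by
    intro i
    refine le_trans ?_ (hfy _ _)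
    rw [Real.dist_eq]
    rcases le_total (I i).1 (I i).2 with h | h
    · simp [hA, hB, h, abs_sub_comm]
    · simp [hA, hB, h]
  have hH := H m s t ?_ h2 ?_
  · rw [key (fun p q => ‖y q - y p‖) (by simp)] at hH
    exact lt_of_le_of_lt (Finset.sum_le_sum fun i _ => e2 i) hH
  · intro i hi
    obtain ⟨j, hj, hs, ht⟩ := h1 i hi
    have := hI1 j (Finset.mem_filter.1 hj).1
    rw [uIcc_of_le hab] at this
    rw [hs, ht]
    exact ⟨le_min this.1.1 this.2.1, min_le_max, max_le this.1.2 this.2.2⟩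
  · rw [key (fun p q => q - p) (by simp)]
    simpa only [e1] using hlen

theorem aux_nonpos (f : ℝ → ℝ) (a b : ℝ) (hab : a ≤ b) (hf : AbsolutelyContinuousOnInterval f a b)
    (h : ∀ᵐ t, t ∈ Ioo a b → deriv f t ≤ 0) : f b ≤ f a := by
  have h1 := hf.integral_deriv_eq_sub
  rw [intervalIntegral.integral_of_le hab, integral_Ioc_eq_integral_Ioo] at h1
  have h2 : ∫ t in Ioo a b, deriv f t ≤ 0 := by
    apply integral_nonpos_of_ae
    rw [Filter.EventuallyLE, ae_restrict_iff' measurableSet_Ioo]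
    exact h
  linarith

theorem aux_barrier (f : ℝ → ℝ) (a b η : ℝ) (hab : a ≤ b) (hη : 0 < η)
    (hf : AbsolutelyContinuousOnInterval f a b) (ha : f a ≤ 0)
    (h : ∀ᵐ t, t ∈ Ioo a b → 0 < f t → f t < η → deriv f t ≤ 0) : f b ≤ 0 := by
  by_contra! hb
  have hc : ContinuousOn f (Icc a b) := by
    have := hf.continuousOn
    rwa [uIcc_of_le hab] at this
  have hK : IsCompact (Icc a b ∩ f ⁻¹' (Iic 0)) :=
    isCompact_Icc.of_isClosed_subset (hc.preimage_isClosed_of_isClosed isClosed_Icc isClosed_Iic)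
      inter_subset_left
  obtain ⟨s, ⟨hs1, hs2⟩, hs3⟩ := hK.exists_isGreatest ⟨a, ⟨le_rfl, hab⟩, ha⟩
  have hs2 : f s ≤ 0 := hs2
  have hsb : s < b := lt_of_le_of_ne hs1.2 (by rintro rfl; linarith)
  have hpos : ∀ t, s < t → t ≤ b → 0 < f t := by
    intro t h1 h2
    by_contra! h3
    exact absurd (hs3 ⟨⟨hs1.1.trans h1.le, h2⟩, h3⟩) (not_le.2 h1)
  have hnear : ∀ᶠ t in nhdsWithin s (Icc a b), f t < η :=
    (hc s hs1).eventually (gt_mem_nhds (lt_of_le_of_lt hs2 hη))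
  obtain ⟨e, he, hball⟩ := Metric.mem_nhdsWithin_iff.1 hnear
  set t := min b (s + e / 2) with ht
  have hst : s < t := lt_min hsb (by linarith)
  have htb : t ≤ b := min_le_left _ _
  have hte : t ≤ s + e / 2 := min_le_right _ _
  have : f t ≤ f s := by
    apply aux_nonpos f s t hst.le
    · apply hf.mono
      rw [uIcc_of_le hab, uIcc_of_le hst.le]
      exact Icc_subset_Icc hs1.1 htb
    · filter_upwards [h] with q hq hqi
      apply hq ⟨lt_of_le_of_lt hs1.1 hqi.1, lt_of_lt_of_le hqi.2 htb⟩
      · exact hpos q hqi.1 (hqi.2.le.trans htb)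
      · apply hball
        refine ⟨?_, hs1.1.trans hqi.1.le, hqi.2.le.trans htb⟩
        rw [Metric.mem_ball, Real.dist_eq, abs_lt]
        constructor <;> linarith [hqi.1, hqi.2]
  linarith [hpos t hst htb]

/-- Comparison principle for absolutely continuous functions. -/
theorem aux_compare (x u u' : ℝ → ℝ) (a b K : ℝ) (hab : a ≤ b) (hK : 0 ≤ K)
    (hx : AbsolutelyContinuousOnInterval x a b) (hu : ContDiff ℝ 1 u)
    (hu' : ∀ t, HasDerivAt u (u' t) t) (ha : x a ≤ u a)
    (h : ∀ᵐ t, t ∈ Ioo a b → ∃ g, HasDerivAt x g t ∧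
      (u t < x t → g - u' t ≤ K * (x t - u t))) : x b ≤ u b := by
  apply le_of_forall_pos_le_add
  intro ε hε
  set E : ℝ → ℝ := fun t => ε * Real.exp ((K + 1) * (t - b)) with hE
  have hEd : ∀ t, HasDerivAt E ((K + 1) * E t) t := by
    intro t
    have h1 : HasDerivAt (fun t => (K + 1) * (t - b)) (K + 1) t := by
      simpa using ((hasDerivAt_id t).sub_const b).const_mul (K + 1)
    refine ((h1.exp).const_mul ε).congr_deriv ?_
    simp only [hE]; ring
  have hEc : ContDiff ℝ 1 E := by
    simp only [hE]; fun_prop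
  have hEpos : ∀ t, 0 < E t := fun t => by positivity
  have hEb : E b = ε := by simp [hE]
  have hac : AbsolutelyContinuousOnInterval (x - (u + E)) a b :=
    hx.sub ((hu.add hEc).contDiffOn.absolutelyContinuousOnInterval)
  have := aux_barrier (x - (u + E)) a b (E a / (K + 1)) hab (by have := hEpos a; positivity) hac
    (by simp only [Pi.sub_apply, Pi.add_apply]; linarith [hEpos a]) ?_
  · simp only [Pi.sub_apply, Pi.add_apply, hEb] at this
    linarith
  · filter_upwards [h] with t ht hti h1 h2
    obtain ⟨g, hg, hg2⟩ := ht hti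
    have hd := hg.sub ((hu' t).add (hEd t))
    rw [hd.deriv]
    simp only [Pi.sub_apply, Pi.add_apply] at h1 h2
    have hEt : E a ≤ E t := by
      simp only [hE]
      have := hti.1.le
      gcongr
    have h3 := hg2 (by linarith [hEpos t])
    rw [lt_div_iff₀ (by linarith)] at h2
    nlinarith [hEpos t]

theorem aux_f (d x : ℝ) (h1 : -1 ≤ d) (h2 : d ≤ 1) (hx : 0 ≤ x) : d * x ^ 2 - x ^ 3 ≤ x / 4 := by
  nlinarith [mul_nonneg hx (sq_nonneg (x - 1/2)), mul_nonneg (sub_nonneg.2 h2) (sq_nonneg x)]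

theorem aux_step_pos (x d v : ℝ → ℝ) (a b S w : ℝ) (hab : a ≤ b) (hba : b - a ≤ 1 / 7)
    (hS : 0 ≤ S) (hw : 0 ≤ w) (hxa : x a = w)
    (hx : AbsolutelyContinuousOnInterval x a b) (hd : ∀ t, d t ∈ Icc (-1 : ℝ) 1)
    (hv : ∀ t ∈ Ioo a b, |v t| ≤ S)
    (h : ∀ᵐ t, t ∈ Ioo a b → HasDerivAt x (d t * x t ^ 2 - x t ^ 3 - 2 * w + v t) t) :
    |x b| ≤ max (w * Real.exp (-(3 / 4) * (b - a))) (5 / 4 * S) := by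
  -- lower bound
  have hlin : ∀ p q : ℝ, ∀ t, HasDerivAt (fun t => p + q * (t - a)) q t := by
    intro p q t
    simpa using (((hasDerivAt_id t).sub_const a).const_mul q).const_add p
  have hlow : -x b ≤ 0 + (10 / 9 * (2 * w + S)) * (b - a) := by
    refine aux_compare (-x) (fun t => 0 + (10 / 9 * (2 * w + S)) * (t - a)) _ a b (1 / 4) hab
      (by norm_num) hx.neg (by fun_prop) (hlin _ _) (by simp [hxa, hw]) ?_
    filter_upwards [h] with t ht hti
    refine ⟨_, (ht hti).neg, ?_⟩
    intro hlt
    simp only [Pi.neg_apply] at hlt ⊢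
    have h0 : 0 ≤ t - a := by linarith [hti.1]
    have h7 : t - a ≤ 1 / 7 := by linarith [hti.2]
    have hq : 0 ≤ 2 * w + S := by linarith
    have hm := mul_nonneg hq h0
    have hm2 := mul_le_mul_of_nonneg_left h7 hq
    have hf := aux_f (-d t) (-x t) (by linarith [(hd t).2]) (by linarith [(hd t).1]) (by nlinarith)
    have hvv := abs_le.1 (hv t hti)
    nlinarith
  have hq : 0 ≤ 2 * w + S := by linarith
  have hm2 := mul_le_mul_of_nonneg_left hba hq
  have h0 : 0 ≤ b - a := by linarith
  rcases le_or_gt S w with hSw | hSw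
  · -- decay
    have hup : x b ≤ w + (-(3 / 4) * w) * (b - a) := by
      refine aux_compare x (fun t => w + (-(3 / 4) * w) * (t - a)) _ a b (1 / 4) hab
        (by norm_num) hx (by fun_prop) (hlin _ _) (by simp [hxa]) ?_
      filter_upwards [h] with t ht hti
      refine ⟨_, ht hti, ?_⟩
      intro hlt
      have h0 : 0 ≤ t - a := by linarith [hti.1]
      have h7 : t - a ≤ 1 / 7 := by linarith [hti.2]
      have hm := mul_nonneg hw h0
      have hm2 := mul_le_mul_of_nonneg_left h7 hw
      have hf := aux_f (d t) (x t) (hd t).1 (hd t).2 (by nlinarith)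
      have hvv := abs_le.1 (hv t hti)
      nlinarith
    have he := Real.add_one_le_exp (-(3 / 4) * (b - a))
    have hwe := mul_le_mul_of_nonneg_left he hw
    have hwb := mul_le_mul_of_nonneg_left hba hw
    apply le_max_of_le_left
    rw [abs_le]
    constructor <;> nlinarith
  · have hup : x b ≤ w + (10 / 9 * S) * (b - a) := by
      refine aux_compare x (fun t => w + (10 / 9 * S) * (t - a)) _ a b (1 / 4) hab
        (by norm_num) hx (by fun_prop) (hlin _ _) (by simp [hxa]) ?_
      filter_upwards [h] with t ht hti
      refine ⟨_, ht hti, ?_⟩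
      intro hlt
      have h0 : 0 ≤ t - a := by linarith [hti.1]
      have h7 : t - a ≤ 1 / 7 := by linarith [hti.2]
      have hm := mul_nonneg hS h0
      have hm2 := mul_le_mul_of_nonneg_left h7 hS
      have hf := aux_f (d t) (x t) (hd t).1 (hd t).2 (by nlinarith)
      have hvv := abs_le.1 (hv t hti)
      nlinarith
    have hsb := mul_le_mul_of_nonneg_left hba hS
    apply le_max_of_le_right
    rw [abs_le]
    constructor <;> nlinarith

theorem aux_step (x d v : ℝ → ℝ) (a b S : ℝ) (hab : a ≤ b) (hba : b - a ≤ 1 / 7)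
    (hS : 0 ≤ S)
    (hx : AbsolutelyContinuousOnInterval x a b) (hd : ∀ t, d t ∈ Icc (-1 : ℝ) 1)
    (hv : ∀ t ∈ Ioo a b, |v t| ≤ S)
    (h : ∀ᵐ t, t ∈ Ioo a b → HasDerivAt x (d t * x t ^ 2 - x t ^ 3 - 2 * x a + v t) t) :
    |x b| ≤ max (|x a| * Real.exp (-(3 / 4) * (b - a))) (5 / 4 * S) := by
  rcases le_total 0 (x a) with hw | hw
  · rw [abs_of_nonneg hw]
    exact aux_step_pos x d v a b S (x a) hab hba hS hw rfl hx hd hv h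
  · rw [abs_of_nonpos hw]
    have := aux_step_pos (-x) (fun t => -d t) (fun t => -v t) a b S (-x a) hab hba hS (by linarith)
      rfl hx.neg (fun t => ⟨by linarith [(hd t).2], by linarith [(hd t).1]⟩)
      (fun t ht => by rw [abs_neg]; exact hv t ht) ?_
    · simpa using this
    · filter_upwards [h] with t ht hti
      refine (ht hti).neg.congr_deriv ?_
      simp only [Pi.neg_apply]; ring

theorem aux_step1_up (x y d : ℝ → ℝ) (a b P S : ℝ) (hab : a ≤ b) (hP : 0 ≤ P) (hS : 0 ≤ S)
    (hx : AbsolutelyContinuousOnInterval x a b) (hd : ∀ t, 0 ≤ d t)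
    (hy : ∀ t ∈ Ioo a b, y t ≤ P * Real.exp (-(3 / 4) * t) + 5 / 4 * S)
    (hxa : x a ≤ P * Real.exp (-(3 / 4) * a) + 5 / 4 * S)
    (h : ∀ᵐ t, t ∈ Ioo a b → HasDerivAt x (-2 * x t - d t * x t ^ 3 + y t) t) :
    x b ≤ P * Real.exp (-(3 / 4) * b) + 5 / 4 * S := by
  refine aux_compare x (fun t => P * Real.exp (-(3 / 4) * t) + 5 / 4 * S)
    (fun t => P * (Real.exp (-(3 / 4) * t) * (-(3 / 4)))) a b 0 hab
    le_rfl hx (by fun_prop) ?_ hxa ?_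
  · intro t
    have h1 : HasDerivAt (fun t : ℝ => -(3 / 4) * t) (-(3 / 4)) t := by
      simpa using (hasDerivAt_id t).const_mul (-(3 / 4) : ℝ)
    exact (h1.exp.const_mul P).add_const _
  · filter_upwards [h] with t ht hti
    refine ⟨_, ht hti, ?_⟩
    intro hlt
    have he : 0 ≤ P * Real.exp (-(3 / 4) * t) := by positivity
    have hx0 : 0 ≤ x t := by linarith
    have hc : 0 ≤ d t * x t ^ 3 := mul_nonneg (hd t) (by positivity)
    have := hy t hti
    linarith

theorem aux_step1 (x y d : ℝ → ℝ) (a b P S : ℝ) (hab : a ≤ b) (hP : 0 ≤ P) (hS : 0 ≤ S)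
    (hx : AbsolutelyContinuousOnInterval x a b) (hd : ∀ t, 0 ≤ d t)
    (hy : ∀ t ∈ Ioo a b, |y t| ≤ P * Real.exp (-(3 / 4) * t) + 5 / 4 * S)
    (hxa : |x a| ≤ P * Real.exp (-(3 / 4) * a) + 5 / 4 * S)
    (h : ∀ᵐ t, t ∈ Ioo a b → HasDerivAt x (-2 * x t - d t * x t ^ 3 + y t) t) :
    |x b| ≤ P * Real.exp (-(3 / 4) * b) + 5 / 4 * S := by
  rw [abs_le']
  refine ⟨aux_step1_up x y d a b P S hab hP hS hx hd (fun t ht => (abs_le'.1 (hy t ht)).1)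
    (abs_le'.1 hxa).1 h, ?_⟩
  refine aux_step1_up (-x) (-y) d a b P S hab hP hS hx.neg hd
    (fun t ht => (abs_le'.1 (hy t ht)).2) (abs_le'.1 hxa).2 ?_
  filter_upwards [h] with t ht hti
  refine (ht hti).neg.congr_deriv ?_
  simp only [Pi.neg_apply]; ring

theorem aux_exists_interval (τ : ℕ → ℝ) (dd : ℝ → ℝ) (r : ℝ) (hr : 0 < r)
    (hdd : ∀ b : ℝ, ∃ C, ∀ t ∈ Icc (0:ℝ) b, dd t ≤ C) (h0 : τ 0 = 0)
    (hτ : ∀ i : ℕ, τ (i + 1) = τ i + r * Real.exp (-(dd (τ i)))) (t : ℝ) (ht : 0 ≤ t) :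
    ∃ i, τ i ≤ t ∧ t ≤ τ (i + 1) := by
  by_contra! hcon
  have hle : ∀ i, τ i ≤ t := by
    intro i
    induction i with
    | zero => rw [h0]; exact ht
    | succ k ih => exact (hcon k ih).le
  have hnn : ∀ i, 0 ≤ τ i := by
    intro i
    induction i with
    | zero => rw [h0]
    | succ k ih => rw [hτ]; positivity
  obtain ⟨C, hC⟩ := hdd t
  have hgrow : ∀ i : ℕ, i * (r * Real.exp (-C)) ≤ τ i := by
    intro i
    induction i with
    | zero => simp [h0]
    | succ k ih =>
      rw [hτ]
      have : Real.exp (-C) ≤ Real.exp (-(dd (τ k))) :=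
        Real.exp_le_exp.2 (neg_le_neg (hC _ ⟨hnn k, hle k⟩))
      have := mul_le_mul_of_nonneg_left this hr.le
      push_cast
      linarith
  obtain ⟨n, hn⟩ := exists_nat_gt (t / (r * Real.exp (-C)))
  rw [div_lt_iff₀ (by positivity)] at hn
  linarith [hgrow n, hle n]

theorem aux_KL : ClassKL (fun s t => 2 * s * Real.exp (-(3 / 4) * t)) := by
  refine ⟨by fun_prop, ?_, ?_, ?_⟩
  · intro t _
    refine ⟨by fun_prop, ?_, by simp⟩
    intro x _ y _ hxy
    have := Real.exp_pos (-(3 / 4) * t)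
    simp only
    gcongr
  · intro s hs
    have hs : 0 ≤ s := hs
    constructor
    · intro x _ y _ hxy
      simp only
      refine mul_le_mul_of_nonneg_left (Real.exp_le_exp.2 (by linarith)) (by positivity)
    · have h1 : Filter.Tendsto (fun t : ℝ => -(3 / 4) * t) Filter.atTop Filter.atBot :=
        Filter.tendsto_id.const_mul_atTop_of_neg (by norm_num)
      simpa using (Real.tendsto_exp_atBot.comp h1).const_mul (2 * s)
  · intro s hs t _
    have hs : 0 ≤ s := hs
    positivity

end

/-- UISS conclusion of Example 4.1 via the vector Lyapunov function
`V₁(x) = x₁²/2`, `V₂(x) = x₂²/2`: for constants `r > 0`, `δ ≥ 0`, `Δ ≥ δ`,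
`1 < c < 2` with `r < 1/(5c²+2)` and `r ≤ 1/(6c³)`, there is a `KL` function `σ`
(depending only on the constants) such that every solution of the sampled-data system
(4.2) satisfies `|x(t)| ≤ σ(|x₀|, t) + 2√2 · sup_{0 ≤ τ ≤ t} |v(τ)|` for all `t ≥ 0`. -/
theorem stmt_11 (r δ Δ c : ℝ) (hr : 0 < r) (hδ : 0 ≤ δ) (hΔ : δ ≤ Δ)
    (hc1 : 1 < c) (hc2 : c < 2)
    (hr1 : r < 1 / (5 * c ^ 2 + 2)) (hr2 : r ≤ 1 / (6 * c ^ 3)) :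
    ∃ σ : ℝ → ℝ → ℝ, ClassKL σ ∧
      ∀ (x₁ x₂ d₁ d₂ dd v : ℝ → ℝ) (τ : ℕ → ℝ),
        Measurable d₁ → Measurable d₂ → Measurable dd → Measurable v →
        (∀ t, d₁ t ∈ Set.Icc δ Δ) → (∀ t, d₂ t ∈ Set.Icc (-1 : ℝ) 1) →
        (∀ t, 0 ≤ dd t) →
        (∀ b : ℝ, ∃ C, ∀ t ∈ Set.Icc (0:ℝ) b, dd t ≤ C) →
        (∀ b : ℝ, ∃ C, ∀ t ∈ Set.Icc (0:ℝ) b, |v t| ≤ C) →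
        τ 0 = 0 →
        (∀ i : ℕ, τ (i + 1) = τ i + r * Real.exp (-(dd (τ i)))) →
        (∀ i : ℕ, AbsContOn (fun t => (x₁ t, x₂ t)) (τ i) (τ (i + 1))) →
        (∀ i : ℕ, ∀ᵐ t ∂MeasureTheory.volume, t ∈ Set.Ico (τ i) (τ (i + 1)) →
          HasDerivAt x₁ (-2 * x₁ t - d₁ t * x₁ t ^ 3 + x₂ t) t ∧
          HasDerivAt x₂ (d₂ t * x₂ t ^ 2 - x₂ t ^ 3 - 2 * x₂ (τ i) + v t) t) →
        ∀ t ≥ (0:ℝ),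
          Real.sqrt (x₁ t ^ 2 + x₂ t ^ 2) ≤
            σ (Real.sqrt (x₁ 0 ^ 2 + x₂ 0 ^ 2)) t +
              2 * Real.sqrt 2 * sSup ((fun s => |v s|) '' Set.Icc 0 t) := by
  refine ⟨fun s t => 2 * s * Real.exp (-(3 / 4) * t), aux_KL, ?_⟩
  intro x₁ x₂ d₁ d₂ dd v τ _ _ _ _ hd₁ hd₂ hdd0 hdd hv hτ0 hτ hac hode T hT
  set S := sSup ((fun s => |v s|) '' Set.Icc 0 T) with hSdef
  have hbdd : BddAbove ((fun s => |v s|) '' Set.Icc 0 T) := by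
    obtain ⟨C, hC⟩ := hv T
    refine ⟨C, ?_⟩
    rintro _ ⟨t, ht, rfl⟩
    exact hC t ht
  have hvS : ∀ t, 0 ≤ t → t ≤ T → |v t| ≤ S := fun t h1 h2 =>
    le_csSup hbdd ⟨t, ⟨h1, h2⟩, rfl⟩
  have hS : 0 ≤ S := (abs_nonneg _).trans (hvS 0 le_rfl hT)
  set P := Real.sqrt (x₁ 0 ^ 2 + x₂ 0 ^ 2) with hPdef
  have hP : 0 ≤ P := Real.sqrt_nonneg _
  have hP1 : |x₁ 0| ≤ P := Real.abs_le_sqrt (by nlinarith [sq_nonneg (x₂ 0)])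
  have hP2 : |x₂ 0| ≤ P := Real.abs_le_sqrt (by nlinarith [sq_nonneg (x₁ 0)])
  have hr7 : r ≤ 1 / 7 := by
    refine hr1.le.trans ?_
    apply one_div_le_one_div_of_le (by norm_num)
    nlinarith
  have hτle : ∀ i, τ i ≤ τ (i + 1) := by
    intro i; rw [hτ]; have := Real.exp_pos (-(dd (τ i))); nlinarith
  have hτr : ∀ i, τ (i + 1) - τ i ≤ 1 / 7 := by
    intro i
    have : Real.exp (-(dd (τ i))) ≤ 1 := Real.exp_le_one_iff.2 (by linarith [hdd0 (τ i)])
    rw [hτ]; nlinarith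
  have hτnn : ∀ i, 0 ≤ τ i := by
    intro i
    induction i with
    | zero => rw [hτ0]
    | succ k ih => exact ih.trans (hτle k)
  have hac1 : ∀ i t, τ i ≤ t → t ≤ τ (i + 1) → AbsolutelyContinuousOnInterval x₁ (τ i) t := by
    intro i t h1 h2
    refine (aux_ac _ x₁ (fun s t => ?_) _ _ (hτle i) (hac i)).mono ?_
    · exact norm_fst_le ((x₁ t, x₂ t) - (x₁ s, x₂ s))
    · rw [Set.uIcc_of_le h1, Set.uIcc_of_le (hτle i)]
      exact Set.Icc_subset_Icc le_rfl h2
  have hac2 : ∀ i t, τ i ≤ t → t ≤ τ (i + 1) → AbsolutelyContinuousOnInterval x₂ (τ i) t := by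
    intro i t h1 h2
    refine (aux_ac _ x₂ (fun s t => ?_) _ _ (hτle i) (hac i)).mono ?_
    · exact norm_snd_le ((x₁ t, x₂ t) - (x₁ s, x₂ s))
    · rw [Set.uIcc_of_le h1, Set.uIcc_of_le (hτle i)]
      exact Set.Icc_subset_Icc le_rfl h2
  have step2 : ∀ i t, τ i ≤ t → t ≤ τ (i + 1) → t ≤ T →
      |x₂ (τ i)| ≤ max (P * Real.exp (-(3 / 4) * τ i)) (5 / 4 * S) →
      |x₂ t| ≤ max (P * Real.exp (-(3 / 4) * t)) (5 / 4 * S) := by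
    intro i t h1 h2 h3 hw
    have hst := aux_step x₂ d₂ v (τ i) t S h1 (by linarith [hτr i]) hS (hac2 i t h1 h2) hd₂
      (fun q hq => hvS q ((hτnn i).trans hq.1.le) (hq.2.le.trans h3)) (by
        filter_upwards [hode i] with q hq hqi
        exact (hq ⟨hqi.1.le, lt_of_lt_of_le hqi.2 h2⟩).2)
    refine hst.trans (max_le ?_ (le_max_right _ _))
    rcases le_max_iff.1 hw with hw | hw
    · apply le_max_of_le_left
      calc _ ≤ P * Real.exp (-(3 / 4) * τ i) * Real.exp (-(3 / 4) * (t - τ i)) := by gcongr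
        _ = P * Real.exp (-(3 / 4) * t) := by
          rw [mul_assoc, ← Real.exp_add]; ring_nf
    · apply le_max_of_le_right
      have : Real.exp (-(3 / 4) * (t - τ i)) ≤ 1 := Real.exp_le_one_iff.2 (by linarith)
      calc _ ≤ |x₂ (τ i)| * 1 := by gcongr
        _ ≤ _ := by linarith
  have node2 : ∀ i, τ i ≤ T → |x₂ (τ i)| ≤ max (P * Real.exp (-(3 / 4) * τ i)) (5 / 4 * S) := by
    intro i
    induction i with
    | zero => intro _; apply le_max_of_le_left; simpa [hτ0] using hP2
    | succ k ih =>
      intro hk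
      exact step2 k _ (hτle k) le_rfl hk (ih ((hτle k).trans hk))
  have bound2 : ∀ i t, τ i ≤ t → t ≤ τ (i + 1) → t ≤ T →
      |x₂ t| ≤ P * Real.exp (-(3 / 4) * t) + 5 / 4 * S := by
    intro i t h1 h2 h3
    refine (step2 i t h1 h2 h3 (node2 i (h1.trans h3))).trans ?_
    have : 0 ≤ P * Real.exp (-(3 / 4) * t) := by positivity
    exact max_le (by linarith) (by linarith)
  have step1 : ∀ i t, τ i ≤ t → t ≤ τ (i + 1) → t ≤ T →
      |x₁ (τ i)| ≤ P * Real.exp (-(3 / 4) * τ i) + 5 / 4 * S →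
      |x₁ t| ≤ P * Real.exp (-(3 / 4) * t) + 5 / 4 * S := by
    intro i t h1 h2 h3 hw
    refine aux_step1 x₁ x₂ d₁ (τ i) t P S h1 hP hS (hac1 i t h1 h2)
      (fun t => hδ.trans (hd₁ t).1)
      (fun q hq => bound2 i q hq.1.le (hq.2.le.trans h2) (hq.2.le.trans h3)) hw ?_
    filter_upwards [hode i] with q hq hqi
    exact (hq ⟨hqi.1.le, lt_of_lt_of_le hqi.2 h2⟩).1
  have node1 : ∀ i, τ i ≤ T → |x₁ (τ i)| ≤ P * Real.exp (-(3 / 4) * τ i) + 5 / 4 * S := by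
    intro i
    induction i with
    | zero => intro _; simp only [hτ0, mul_zero, Real.exp_zero, mul_one]; linarith
    | succ k ih =>
      intro hk
      exact step1 k _ (hτle k) le_rfl hk (ih ((hτle k).trans hk))
  obtain ⟨i, hi1, hi2⟩ := aux_exists_interval τ dd r hr hdd hτ0 hτ T hT
  have b2 := bound2 i T hi1 hi2 le_rfl
  have b1 := step1 i T hi1 hi2 le_rfl (node1 i hi1)
  have hsq : (5 / 4 : ℝ) ≤ Real.sqrt 2 := Real.le_sqrt_of_sq_le (by norm_num)
  have hSs := mul_le_mul_of_nonneg_right hsq hS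
  have htri : Real.sqrt (x₁ T ^ 2 + x₂ T ^ 2) ≤ |x₁ T| + |x₂ T| := by
    apply Real.sqrt_le_iff.2
    refine ⟨by positivity, ?_⟩
    nlinarith [sq_abs (x₁ T), sq_abs (x₂ T), mul_nonneg (abs_nonneg (x₁ T)) (abs_nonneg (x₂ T))]
  calc _ ≤ |x₁ T| + |x₂ T| := htri
    _ ≤ _ := by
      simp only
      nlinarith
end

section
/- Fix real constants c > 1, δ > 0, Δ ≥ δ, and r > 0 with r < 7/(40c² + 8) and r ≤ c⁻³·min{1/11, δ/5}. Consider any x₀ = (x₁(0), x₂(0)) ∈ ℝ², any Lebesgue measurable locally bounded inputs d₁ : [0, ∞) → [δ, Δ], d₂ : [0, ∞) → [−1, 1], d̃ : [0, ∞) → [0, ∞), v : [0, ∞) → ℝ, any sequence of sampling times τ₀ = 0, τ_{i+1} = τ_i + r·exp(−d̃(τ_i)), and any function x = (x₁, x₂) : [0, ∞) → ℝ² with x(0) = x₀ which is absolutely continuous on each interval [τ_i, τ_{i+1}] and satisfies, for almost every t ∈ [τ_i, τ_{i+1}), ẋ₁(t) = −2x₁(t) − d₁(t)x₁(t)³ +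 x₂(t) and ẋ₂(t) = d₂(t)x₂(t)² − x₂(t)³ − 2x₂(τ_i) + v(t). Then there exists a function σ of class KL, depending only on r, δ, Δ, c (not on x₀, d₁, d₂, d̃, v), such that |x(t)| ≤ σ(|x₀|, t) + 2 · sup_{0 ≤ τ ≤ t} |v(τ)| for all t ≥ 0. -/
open Set MeasureTheory in
lemma AbsContOn.toMathlib {y : ℝ → ℝ} {a b : ℝ} (hab : a ≤ b) (h : AbsContOn y a b) :
    AbsolutelyContinuousOnInterval y a b := by
  rw [absolutelyContinuousOnInterval_iff]
  intro ε hε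
  obtain ⟨δ, hδ, H⟩ := h ε hε
  refine ⟨δ, hδ, ?_⟩
  rintro ⟨n, I⟩ ⟨hmem, hdisj⟩ hlen
  simp only at hmem hdisj hlen ⊢
  set lo : ℕ → ℝ := fun i => min (I i).1 (I i).2 with hlo
  set hi : ℕ → ℝ := fun i => max (I i).1 (I i).2 with hhi
  have hle : ∀ i, lo i ≤ hi i := fun i => min_le_max
  set F : Finset ℕ := (Finset.range n).filter (fun i => lo i < hi i) with hF
  have hFm : ∀ i, i ∈ F → i < n ∧ lo i < hi i := by
    intro i hi'
    simpa [hF] using hi'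
  have key : ∀ i ∈ F, ∀ j ∈ F, i ≠ j → lo i ≤ lo j → hi i ≤ lo j := by
    intro i hiF j hjF hij hl
    by_contra hcon
    push Not at hcon
    have hd := hdisj (by simpa using (hFm i hiF).1) (by simpa using (hFm j hjF).1) hij
    have hj2 := (hFm j hjF).2
    refine Set.disjoint_left.1 hd (?_ : min (hi i) (hi j) ∈ _) ?_
    · exact ⟨lt_min (lt_of_le_of_lt hl hcon) (lt_of_le_of_lt hl hj2), min_le_left _ _⟩
    · exact ⟨lt_min hcon hj2, min_le_right _ _⟩
  have hinj : ∀ i ∈ F, ∀ j ∈ F, lo i = lo j → i = j := by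
    intro i hiF j hjF hl
    by_contra hij
    have h1 := key i hiF j hjF hij hl.le
    have h2 := (hFm i hiF).2
    linarith
  set L := F.image lo with hL
  set e := L.orderIsoOfFin (k := L.card) rfl with he
  have hex : ∀ m : Fin L.card, ∃ i ∈ F, lo i = e m := by
    intro m
    have := (e m).2
    exact Finset.mem_image.1 this
  choose idx hidxF hidx using hex
  have hmono : ∀ m m' : Fin L.card, m < m' → lo (idx m) < lo (idx m') := by
    intro m m' hm
    rw [hidx, hidx]
    exact_mod_cast e.strictMono hm
  have hsum : ∀ g : ℕ → ℝ, (∀ i, lo i = hi i → g i = 0) →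
      ∑ m : Fin L.card, g (idx m) = ∑ i ∈ Finset.range n, g i := by
    intro g hg
    have h1 : ∑ i ∈ F, g i = ∑ i ∈ Finset.range n, g i := by
      apply Finset.sum_filter_of_ne
      intro i _ hne
      by_contra hcon
      exact hne (hg i (le_antisymm (hle i) (not_lt.1 hcon)))
    rw [← h1]
    apply Finset.sum_nbij idx
    · intro m _; exact hidxF m
    · intro m _ m' _ hmm
      by_contra hne
      rcases lt_or_gt_of_ne hne with h' | h'
      · have := hmono _ _ h'; rw [hmm] at this; exact lt_irrefl _ this
      · have := hmono _ _ h'; rw [hmm] at this; exact lt_irrefl _ this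
    · intro i hiF
      have hiL : lo i ∈ L := Finset.mem_image_of_mem lo hiF
      refine ⟨e.symm ⟨lo i, hiL⟩, by simp, ?_⟩
      apply hinj _ (hidxF _) _ hiF
      rw [hidx]; simp
    · intro m _; rfl
  set s : ℕ → ℝ := fun m => if hm : m < L.card then lo (idx ⟨m, hm⟩) else 0 with hs
  set t : ℕ → ℝ := fun m => if hm : m < L.card then hi (idx ⟨m, hm⟩) else 0 with ht
  have hss : ∀ m : Fin L.card, s m = lo (idx m) := by intro m; simp [hs]
  have htt : ∀ m : Fin L.card, t m = hi (idx m) := by intro m; simp [ht]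
  have hfin := H L.card s t ?_ ?_ ?_
  · rw [Finset.sum_range] at hfin
    simp only [hss, htt] at hfin
    rw [hsum (fun i => ‖y (hi i) - y (lo i)‖) (by intro i hi'; simp [hi'])] at hfin
    convert hfin using 2 with i _
    simp only [hhi, hlo]
    rcases le_total (I i).1 (I i).2 with h' | h'
    · rw [max_eq_right h', min_eq_left h', dist_comm, dist_eq_norm]
    · rw [max_eq_left h', min_eq_right h', dist_eq_norm]
  · intro m hm
    have h1 := hss ⟨m, hm⟩
    have h2 := htt ⟨m, hm⟩
    simp only at h1 h2
    rw [h1, h2]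
    have h3 := hmem (idx ⟨m, hm⟩) (by simpa using (hFm _ (hidxF ⟨m, hm⟩)).1)
    rw [uIcc_of_le hab] at h3
    exact ⟨le_min h3.1.1 h3.2.1, hle _, max_le h3.1.2 h3.2.2⟩
  · intro m hm
    have h1 := hss ⟨m + 1, hm⟩
    have h2 := htt ⟨m, by omega⟩
    simp only at h1 h2
    rw [h1, h2]
    have h3 := hmono ⟨m, by omega⟩ ⟨m + 1, hm⟩ (by simp)
    apply key _ (hidxF _) _ (hidxF _) _ h3.le
    intro heq
    rw [heq] at h3
    exact lt_irrefl _ h3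
  · rw [Finset.sum_range]
    simp only [hss, htt]
    rw [hsum (fun i => hi i - lo i) (by intro i hi'; simp [hi'])]
    convert hlen using 2 with i _
    simp only [hhi, hlo]
    rw [max_sub_min_eq_abs', Real.dist_eq]

open Set MeasureTheory in
/-- An absolutely continuous function with a.e. nonpositive derivative does not increase. -/
lemma ac_le {g : ℝ → ℝ} {a b : ℝ} (hab : a ≤ b) (hg : AbsolutelyContinuousOnInterval g a b)
    (hd : ∀ᵐ t, t ∈ Ioo a b → ∃ g', HasDerivAt g g' t ∧ g' ≤ 0) : g b ≤ g a := by
  have h1 := hg.integral_deriv_eq_sub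
  have h2 : ∫ x in a..b, deriv g x ≤ 0 := by
    rw [intervalIntegral.integral_of_le hab, integral_Ioc_eq_integral_Ioo]
    apply integral_nonpos_of_ae
    rw [Filter.EventuallyLE, ae_restrict_iff' measurableSet_Ioo]
    filter_upwards [hd] with t ht htm
    obtain ⟨g', h, h'⟩ := ht htm
    rw [h.deriv]; exact h'
  linarith

open Set MeasureTheory in
/-- Comparison lemma. -/
lemma ac_comparison {f : ℝ → ℝ} {a b K : ℝ} (hf : AbsolutelyContinuousOnInterval f a b)
    (hd : ∀ᵐ t, t ∈ Ioo a b → 0 < f t → ∃ f', HasDerivAt f f' t ∧ f' ≤ K * f t)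
    (h0 : f a ≤ 0) : ∀ t ∈ Icc a b, f t ≤ 0 := by
  intro t ht
  by_contra hpos
  push Not at hpos
  have hab : a ≤ b := ht.1.trans ht.2
  have hcont : ContinuousOn f (Icc a b) := by
    have := hf.continuousOn
    rwa [uIcc_of_le hab] at this
  have hcont' : ContinuousOn f (Icc a t) := hcont.mono (Icc_subset_Icc_right ht.2)
  set Z := Icc a t ∩ f ⁻¹' Iic 0 with hZ
  have hZc : IsCompact Z := by
    apply IsCompact.of_isClosed_subset isCompact_Icc
      (hcont'.preimage_isClosed_of_isClosed isClosed_Icc isClosed_Iic) inter_subset_left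
  have hZn : Z.Nonempty := ⟨a, ⟨le_refl _, ht.1⟩, h0⟩
  obtain ⟨s, hsZ, hsM⟩ := hZc.exists_isGreatest hZn
  have hst : s ≤ t := hsZ.1.2
  have hfs : f s ≤ 0 := hsZ.2
  have hgt : ∀ u ∈ Ioo s t, 0 < f u := by
    intro u hu
    by_contra hcon
    have : u ∈ Z := ⟨⟨hsZ.1.1.trans hu.1.le, hu.2.le⟩, not_lt.1 hcon⟩
    exact absurd (hsM this) (not_le.2 hu.1)
  have hfac : AbsolutelyContinuousOnInterval f s t := by
    apply hf.mono
    rw [uIcc_of_le hab, uIcc_of_le hst]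
    exact Icc_subset_Icc hsZ.1.1 ht.2
  have hder : ∀ u : ℝ, HasDerivAt (fun u => Real.exp (-K * u)) (Real.exp (-K * u) * (-K)) u := by
    intro u
    have := ((hasDerivAt_id u).const_mul (-K)).exp
    simpa using this
  have hexp : AbsolutelyContinuousOnInterval (fun u => Real.exp (-K * u)) s t := by
    have hcd : ContDiff ℝ 1 (fun u : ℝ => Real.exp (-K * u)) := by fun_prop
    obtain ⟨C, hC⟩ := hcd.contDiffOn.exists_lipschitzOnWith (s := uIcc s t) one_ne_zero
      (convex_uIcc s t) isCompact_uIcc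
    exact hC.absolutelyContinuousOnInterval
  have hle := ac_le hst (hexp.fun_mul hfac) ?_
  · have h1 := Real.exp_pos (-K * t)
    have h2 := Real.exp_pos (-K * s)
    nlinarith [mul_pos h1 hpos, mul_nonneg h2.le (neg_nonneg.2 hfs)]
  · filter_upwards [hd] with u hu hum
    obtain ⟨f', hf', hle⟩ := hu ⟨lt_of_le_of_lt hsZ.1.1 hum.1, lt_of_lt_of_le hum.2 ht.2⟩ (hgt u hum)
    refine ⟨_, (hder u).mul hf', ?_⟩
    have h1 := Real.exp_pos (-K * u)
    nlinarith [mul_le_mul_of_nonneg_left hle h1.le]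

lemma cubic_bound {d y : ℝ} (hd : |d| ≤ 1) (hy : 0 ≤ y) : d * y ^ 2 - y ^ 3 ≤ y / 4 := by
  have h1 : d * y ^ 2 ≤ 1 * y ^ 2 := mul_le_mul_of_nonneg_right (abs_le.1 hd).2 (sq_nonneg y)
  nlinarith [mul_nonneg hy (sq_nonneg (y - 1 / 2))]

lemma affine_ac (m q a b : ℝ) : AbsolutelyContinuousOnInterval (fun u => m * (u - a) + q) a b := by
  have hcd : ContDiff ℝ 1 (fun u : ℝ => m * (u - a) + q) := by fun_prop
  obtain ⟨C, hC⟩ := hcd.contDiffOn.exists_lipschitzOnWith (s := Set.uIcc a b) one_ne_zero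
    (convex_uIcc a b) isCompact_uIcc
  exact hC.absolutelyContinuousOnInterval

lemma affine_deriv (m q a u : ℝ) : HasDerivAt (fun u => m * (u - a) + q) m u := by
  have := (((hasDerivAt_id u).sub_const a).const_mul m).add_const q
  simpa using this

open Set MeasureTheory in
lemma x2_step_pos {y : ℝ → ℝ} {a b S : ℝ} (hab : a ≤ b) (hb : b - a ≤ 1 / 11) (hS : 0 ≤ S)
    (hy : AbsolutelyContinuousOnInterval y a b) (h0 : 0 ≤ y a)
    (hd : ∀ᵐ t, t ∈ Ioo a b → ∃ d w, |d| ≤ 1 ∧ |w| ≤ S ∧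
      HasDerivAt y (d * y t ^ 2 - y t ^ 3 - 2 * y a + w) t) :
    |y b| ≤ (1 - 3 / 2 * (b - a)) * y a + 11 / 10 * (b - a) * S := by
  have hba : 0 ≤ b - a := by linarith
  set y0 := y a with hy0
  have hup : ∀ t ∈ Icc a b, y t - ((11 / 10 * S - 3 / 2 * y0) * (t - a) + y0) ≤ 0 := by
    apply ac_comparison (K := 1 / 4) (hy.fun_sub (affine_ac _ _ a b))
    · filter_upwards [hd] with t ht htm hpos
      obtain ⟨d, w, h1, h2, h3⟩ := ht htm
      refine ⟨_, h3.sub (affine_deriv _ _ a t), ?_⟩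
      have hs0 : 0 ≤ t - a := by linarith [htm.1]
      have hs1 : t - a ≤ 1 / 11 := by linarith [htm.2]
      have e1 := mul_nonneg hs0 h0
      have e2 := mul_nonneg hs0 hS
      have e3 := mul_nonneg (sub_nonneg.2 hs1) h0
      have e4 := mul_nonneg (sub_nonneg.2 hs1) hS
      have hyt : 0 ≤ y t := by nlinarith
      have := cubic_bound h1 hyt
      have := (abs_le.1 h2).2
      nlinarith
    · simp [hy0]
  have hlow : ∀ t ∈ Icc a b, -y t - ((11 / 10 * S + 11 / 5 * y0) * (t - a) + 0) ≤ 0 := by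
    apply ac_comparison (K := 1 / 4) (hy.fun_neg.fun_sub (affine_ac _ _ a b))
    · filter_upwards [hd] with t ht htm hpos
      obtain ⟨d, w, h1, h2, h3⟩ := ht htm
      refine ⟨_, h3.neg.sub (affine_deriv _ _ a t), ?_⟩
      have hs0 : 0 ≤ t - a := by linarith [htm.1]
      have hs1 : t - a ≤ 1 / 11 := by linarith [htm.2]
      have e1 := mul_nonneg hs0 h0
      have e2 := mul_nonneg hs0 hS
      have e3 := mul_nonneg (sub_nonneg.2 hs1) h0
      have e4 := mul_nonneg (sub_nonneg.2 hs1) hS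
      have hyt : 0 ≤ -y t := by nlinarith
      have := cubic_bound (d := -d) (by rwa [abs_neg]) hyt
      have := (abs_le.1 h2).1
      nlinarith
    · simpa [hy0] using h0
  have h1 := hup b ⟨hab, le_refl _⟩
  have h2 := hlow b ⟨hab, le_refl _⟩
  rw [abs_le]
  constructor
  · nlinarith [mul_nonneg (sub_nonneg.2 hb) h0]
  · linarith

open Set MeasureTheory in
lemma x2_step {y : ℝ → ℝ} {a b S : ℝ} (hab : a ≤ b) (hb : b - a ≤ 1 / 11) (hS : 0 ≤ S)
    (hy : AbsolutelyContinuousOnInterval y a b)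
    (hd : ∀ᵐ t, t ∈ Ioo a b → ∃ d w, |d| ≤ 1 ∧ |w| ≤ S ∧
      HasDerivAt y (d * y t ^ 2 - y t ^ 3 - 2 * y a + w) t) :
    |y b| ≤ (1 - 3 / 2 * (b - a)) * |y a| + 11 / 10 * (b - a) * S := by
  rcases le_total 0 (y a) with h0 | h0
  · rw [abs_of_nonneg h0]
    exact x2_step_pos hab hb hS hy h0 hd
  · have := x2_step_pos (y := fun t => -y t) hab hb hS hy.fun_neg (by simpa using h0) ?_
    · rw [abs_of_nonpos h0]
      simpa using this
    · filter_upwards [hd] with t ht htm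
      obtain ⟨d, w, h1, h2, h3⟩ := ht htm
      refine ⟨-d, -w, by rwa [abs_neg], by rwa [abs_neg], ?_⟩
      refine h3.fun_neg.congr_deriv ?_
      ring

open Set MeasureTheory in
lemma x1_step_aux {x : ℝ → ℝ} {a b S A : ℝ} (hab : a ≤ b) (hS : 0 ≤ S) (hA : 0 ≤ A)
    (hx : AbsolutelyContinuousOnInterval x a b)
    (h0 : x a ≤ Real.exp (-a) * A + S)
    (hd : ∀ᵐ t, t ∈ Ioo a b → ∃ d w, 0 ≤ d ∧ |w| ≤ Real.exp (-t) * A + 2 * S ∧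
      HasDerivAt x (-2 * x t - d * x t ^ 3 + w) t) :
    x b ≤ Real.exp (-b) * A + S := by
  have hder : ∀ u : ℝ, HasDerivAt (fun u => Real.exp (-u) * A + S) (-Real.exp (-u) * A) u := by
    intro u
    have := (((hasDerivAt_id u).fun_neg.exp).mul_const A).add_const S
    simpa using this
  have hac : AbsolutelyContinuousOnInterval (fun u => Real.exp (-u) * A + S) a b := by
    have hcd : ContDiff ℝ 1 (fun u : ℝ => Real.exp (-u) * A + S) := by fun_prop
    obtain ⟨C, hC⟩ := hcd.contDiffOn.exists_lipschitzOnWith (s := Set.uIcc a b) one_ne_zero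
      (convex_uIcc a b) isCompact_uIcc
    exact hC.absolutelyContinuousOnInterval
  have hup : ∀ t ∈ Icc a b, x t - (Real.exp (-t) * A + S) ≤ 0 := by
    apply ac_comparison (K := 0) (hx.fun_sub hac)
    · filter_upwards [hd] with t ht htm hpos
      obtain ⟨d, w, h1, h2, h3⟩ := ht htm
      refine ⟨_, h3.sub (hder t), ?_⟩
      have e1 := mul_nonneg (Real.exp_pos (-t)).le hA
      have hxt : 0 ≤ x t := by linarith
      have e2 := mul_nonneg h1 (pow_nonneg hxt 3)
      have := (abs_le.1 h2).2
      linarith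
    · simpa using h0
  linarith [hup b ⟨hab, le_refl _⟩]

open Set MeasureTheory in
lemma x1_step {x : ℝ → ℝ} {a b S A : ℝ} (hab : a ≤ b) (hS : 0 ≤ S) (hA : 0 ≤ A)
    (hx : AbsolutelyContinuousOnInterval x a b)
    (h0 : |x a| ≤ Real.exp (-a) * A + S)
    (hd : ∀ᵐ t, t ∈ Ioo a b → ∃ d w, 0 ≤ d ∧ |w| ≤ Real.exp (-t) * A + 2 * S ∧
      HasDerivAt x (-2 * x t - d * x t ^ 3 + w) t) :
    |x b| ≤ Real.exp (-b) * A + S := by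
  rw [abs_le'] at h0 ⊢
  refine ⟨x1_step_aux hab hS hA hx h0.1 hd, ?_⟩
  apply x1_step_aux (x := fun t => -x t) hab hS hA hx.fun_neg h0.2
  filter_upwards [hd] with t ht htm
  obtain ⟨d, w, h1, h2, h3⟩ := ht htm
  refine ⟨d, -w, h1, by rwa [abs_neg], ?_⟩
  refine h3.fun_neg.congr_deriv ?_
  ring

lemma interval_induction {τ : ℕ → ℝ} {T : ℝ} {P : ℝ → Prop} (h0 : τ 0 = 0)
    (hmono : ∀ i, τ i ≤ τ (i + 1)) (hub : ∃ i, T < τ i) (hP0 : P 0)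
    (hstep : ∀ i, P (τ i) → ∀ t, τ i ≤ t → t ≤ τ (i + 1) → t ≤ T → P t) :
    ∀ t, 0 ≤ t → t ≤ T → P t := by
  have hall : ∀ i, τ i ≤ T → P (τ i) := by
    intro i
    induction i with
    | zero => intro _; rwa [h0]
    | succ k ih =>
      intro h
      exact hstep k (ih ((hmono k).trans h)) _ (hmono k) (le_refl _) h
  intro t ht0 htT
  have hex : ∃ i, t < τ i := by
    obtain ⟨i, hi⟩ := hub
    exact ⟨i, lt_of_le_of_lt htT hi⟩
  classical
  have hspec := Nat.find_spec hex
  rcases hn : Nat.find hex with _ | k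
  · rw [hn, h0] at hspec; linarith
  · have hk : τ k ≤ t := not_lt.1 (Nat.find_min hex (by omega))
    rw [hn] at hspec
    exact hstep k (hall k (hk.trans htT)) t hk hspec.le htT

lemma tau_unbounded {τ : ℕ → ℝ} {dd : ℝ → ℝ} {r : ℝ} (hr : 0 < r) (h0 : τ 0 = 0)
    (hdd : ∀ b : ℝ, ∃ C, ∀ t ∈ Set.Icc (0:ℝ) b, dd t ≤ C)
    (hτ : ∀ i : ℕ, τ (i + 1) = τ i + r * Real.exp (-(dd (τ i)))) (T : ℝ) : ∃ i, T < τ i := by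
  by_contra hcon
  push Not at hcon
  obtain ⟨C, hC⟩ := hdd T
  have hpos : 0 < r * Real.exp (-C) := mul_pos hr (Real.exp_pos _)
  have hge : ∀ i : ℕ, i * (r * Real.exp (-C)) ≤ τ i := by
    intro i
    induction i with
    | zero => simp [h0]
    | succ k ih =>
      have h1 : 0 ≤ τ k := le_trans (by positivity) ih
      have h2 := hC (τ k) ⟨h1, hcon k⟩
      have h3 : Real.exp (-C) ≤ Real.exp (-(dd (τ k))) := Real.exp_le_exp.2 (by linarith)
      have h4 := mul_le_mul_of_nonneg_left h3 hr.le
      rw [hτ k]; push_cast; linarith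
  obtain ⟨n, hn⟩ := exists_nat_gt (T / (r * Real.exp (-C)))
  rw [div_lt_iff₀ hpos] at hn
  linarith [hge n, hcon n]

lemma AbsContOn.fst' {x₁ x₂ : ℝ → ℝ} {a b : ℝ} (h : AbsContOn (fun t => (x₁ t, x₂ t)) a b) :
    AbsContOn x₁ a b := by
  intro ε hε
  obtain ⟨δ, hδ, H⟩ := h ε hε
  refine ⟨δ, hδ, fun n s t h1 h2 h3 => lt_of_le_of_lt ?_ (H n s t h1 h2 h3)⟩
  exact Finset.sum_le_sum fun i _ => norm_fst_le ((x₁ (t i), x₂ (t i)) - (x₁ (s i), x₂ (s i)))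

lemma AbsContOn.snd' {x₁ x₂ : ℝ → ℝ} {a b : ℝ} (h : AbsContOn (fun t => (x₁ t, x₂ t)) a b) :
    AbsContOn x₂ a b := by
  intro ε hε
  obtain ⟨δ, hδ, H⟩ := h ε hε
  refine ⟨δ, hδ, fun n s t h1 h2 h3 => lt_of_le_of_lt ?_ (H n s t h1 h2 h3)⟩
  exact Finset.sum_le_sum fun i _ => norm_snd_le ((x₁ (t i), x₂ (t i)) - (x₁ (s i), x₂ (s i)))

lemma classKL_exp : ClassKL (fun s t => 3 * s * Real.exp (-t)) := by
  refine ⟨by fun_prop, ?_, ?_, ?_⟩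
  · intro t _
    refine ⟨by fun_prop, ?_, by simp⟩
    intro a _ b _ hab
    have := Real.exp_pos (-t)
    simp only
    nlinarith [mul_pos (sub_pos.2 hab) this]
  · intro s hs
    have hs : 0 ≤ s := hs
    constructor
    · intro a _ b _ hab
      have h : Real.exp (-b) ≤ Real.exp (-a) := Real.exp_le_exp.2 (by linarith)
      exact mul_le_mul_of_nonneg_left h (by positivity)
    · have := (Real.tendsto_exp_neg_atTop_nhds_zero).const_mul (3 * s)
      simpa using this
  · intro s hs t _
    have hs : 0 ≤ s := hs
    have := Real.exp_pos (-t)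
    simp only
    positivity

/-- UISS conclusion of Example 4.1 via the single Lyapunov function
`V(x) = x₁²/2 + x₂²/2`: for constants `c > 1`, `δ > 0`, `Δ ≥ δ`, `r > 0` with
`r < 7/(40c² + 8)` and `r ≤ c⁻³·min{1/11, δ/5}`, there is a `KL` function `σ`
(depending only on the constants) such that every solution of the sampled-data system
(4.2) satisfies `|x(t)| ≤ σ(|x₀|, t) + 2 · sup_{0 ≤ τ ≤ t} |v(τ)|` for all `t ≥ 0`. -/
theorem stmt_12 (r δ Δ c : ℝ) (hc : 1 < c) (hδ : 0 < δ) (hΔ : δ ≤ Δ) (hr : 0 < r)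
    (hr1 : r < 7 / (40 * c ^ 2 + 8)) (hr2 : r ≤ c⁻¹ ^ 3 * min (1 / 11) (δ / 5)) :
    ∃ σ : ℝ → ℝ → ℝ, ClassKL σ ∧
      ∀ (x₁ x₂ d₁ d₂ dd v : ℝ → ℝ) (τ : ℕ → ℝ),
        Measurable d₁ → Measurable d₂ → Measurable dd → Measurable v →
        (∀ t, d₁ t ∈ Set.Icc δ Δ) → (∀ t, d₂ t ∈ Set.Icc (-1 : ℝ) 1) →
        (∀ t, 0 ≤ dd t) →
        (∀ b : ℝ, ∃ C, ∀ t ∈ Set.Icc (0:ℝ) b, dd t ≤ C) →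
        (∀ b : ℝ, ∃ C, ∀ t ∈ Set.Icc (0:ℝ) b, |v t| ≤ C) →
        τ 0 = 0 →
        (∀ i : ℕ, τ (i + 1) = τ i + r * Real.exp (-(dd (τ i)))) →
        (∀ i : ℕ, AbsContOn (fun t => (x₁ t, x₂ t)) (τ i) (τ (i + 1))) →
        (∀ i : ℕ, ∀ᵐ t ∂MeasureTheory.volume, t ∈ Set.Ico (τ i) (τ (i + 1)) →
          HasDerivAt x₁ (-2 * x₁ t - d₁ t * x₁ t ^ 3 + x₂ t) t ∧
          HasDerivAt x₂ (d₂ t * x₂ t ^ 2 - x₂ t ^ 3 - 2 * x₂ (τ i) + v t) t) →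
        ∀ t ≥ (0:ℝ),
          Real.sqrt (x₁ t ^ 2 + x₂ t ^ 2) ≤
            σ (Real.sqrt (x₁ 0 ^ 2 + x₂ 0 ^ 2)) t +
              2 * sSup ((fun s => |v s|) '' Set.Icc 0 t) := by
  have hr11 : r ≤ 1 / 11 := by
    have h1 : c⁻¹ ^ 3 ≤ 1 := pow_le_one₀ (by positivity) (inv_le_one_of_one_le₀ hc.le)
    have h2 : 0 ≤ min (1 / 11) (δ / 5) := by positivity
    calc r ≤ c⁻¹ ^ 3 * min (1 / 11) (δ / 5) := hr2
      _ ≤ 1 * min (1 / 11) (δ / 5) := mul_le_mul_of_nonneg_right h1 h2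
      _ ≤ 1 / 11 := by rw [one_mul]; exact min_le_left _ _
  refine ⟨fun s t => 3 * s * Real.exp (-t), classKL_exp, ?_⟩
  intro x₁ x₂ d₁ d₂ dd v τ _ _ _ _ hd₁ hd₂ hdd hddb hvb hτ0 hτ hac hode T hT
  set S := sSup ((fun s => |v s|) '' Set.Icc 0 T) with hSdef
  have hvS : ∀ t ∈ Set.Icc 0 T, |v t| ≤ S := by
    intro t ht
    apply le_csSup
    · obtain ⟨C, hC⟩ := hvb T
      exact ⟨C, by rintro _ ⟨s, hs, rfl⟩; exact hC s hs⟩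
    · exact ⟨t, ht, rfl⟩
  have hS : 0 ≤ S := le_trans (abs_nonneg _) (hvS 0 ⟨le_refl _, hT⟩)
  have hmono : ∀ i, τ i ≤ τ (i + 1) := by
    intro i
    rw [hτ i]
    have := mul_pos hr (Real.exp_pos (-(dd (τ i))))
    linarith
  have hlen : ∀ i, τ (i + 1) - τ i ≤ 1 / 11 := by
    intro i
    rw [hτ i]
    have h1 : Real.exp (-(dd (τ i))) ≤ 1 := Real.exp_le_one_iff.2 (by linarith [hdd (τ i)])
    have := mul_le_mul_of_nonneg_left h1 hr.le
    linarith
  have hτnn : ∀ i, 0 ≤ τ i := by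
    intro i
    rw [← hτ0]
    exact monotone_nat_of_le_succ hmono (Nat.zero_le i)
  have hub := tau_unbounded hr hτ0 hddb hτ T
  have hmonoAC : ∀ (y : ℝ → ℝ) (i : ℕ) (t : ℝ), τ i ≤ t → t ≤ τ (i + 1) →
      AbsContOn y (τ i) (τ (i + 1)) → AbsolutelyContinuousOnInterval y (τ i) t := by
    intro y i t h1 h2 h3
    apply (h3.toMathlib (hmono i)).mono
    rw [Set.uIcc_of_le h1, Set.uIcc_of_le (hmono i)]
    exact Set.Icc_subset_Icc_right h2
  have hx2 : ∀ t, 0 ≤ t → t ≤ T → |x₂ t| ≤ Real.exp (-t) * |x₂ 0| + S := by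
    apply interval_induction (P := fun t => |x₂ t| ≤ Real.exp (-t) * |x₂ 0| + S) hτ0 hmono hub
    · simpa using hS
    · intro i hi t h1 h2 h3
      have hstep := x2_step h1 (by linarith [hlen i]) hS (hmonoAC x₂ i t h1 h2 (hac i).snd') ?_
      · have hs0 : 0 ≤ t - τ i := by linarith
        have hs1 : t - τ i ≤ 1 / 11 := by linarith [hlen i]
        have e0 : 0 ≤ Real.exp (-τ i) * |x₂ 0| := mul_nonneg (Real.exp_pos _).le (abs_nonneg _)
        have e1 : (1 - (t - τ i)) ≤ Real.exp (-(t - τ i)) := by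
          linarith [Real.add_one_le_exp (-(t - τ i))]
        have e2 : Real.exp (-t) * |x₂ 0| = Real.exp (-(t - τ i)) * (Real.exp (-τ i) * |x₂ 0|) := by
          rw [← mul_assoc, ← Real.exp_add]; congr 2; ring
        rw [e2]
        have e3 := mul_le_mul_of_nonneg_right e1 e0
        have e4 := mul_le_mul_of_nonneg_left hi
          (show (0:ℝ) ≤ 1 - 3 / 2 * (t - τ i) by linarith)
        nlinarith [mul_nonneg hs0 e0, mul_nonneg hs0 hS]
      · filter_upwards [hode i] with u hu hum
        obtain ⟨_, h⟩ := hu ⟨hum.1.le, lt_of_lt_of_le hum.2 h2⟩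
        exact ⟨d₂ u, v u, abs_le.2 (hd₂ u),
          hvS u ⟨(hτnn i).trans hum.1.le, hum.2.le.trans h3⟩, h⟩
  have hA : 0 ≤ |x₁ 0| + |x₂ 0| := by positivity
  have hx1 : ∀ t, 0 ≤ t → t ≤ T → |x₁ t| ≤ Real.exp (-t) * (|x₁ 0| + |x₂ 0|) + S / 2 := by
    apply interval_induction
      (P := fun t => |x₁ t| ≤ Real.exp (-t) * (|x₁ 0| + |x₂ 0|) + S / 2) hτ0 hmono hub
    · simp only [neg_zero, Real.exp_zero, one_mul]
      linarith [abs_nonneg (x₂ 0)]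
    · intro i hi t h1 h2 h3
      apply x1_step h1 (by linarith) hA (hmonoAC x₁ i t h1 h2 (hac i).fst') hi
      filter_upwards [hode i] with u hu hum
      obtain ⟨h, _⟩ := hu ⟨hum.1.le, lt_of_lt_of_le hum.2 h2⟩
      refine ⟨d₁ u, x₂ u, hδ.le.trans (hd₁ u).1, ?_, h⟩
      have := hx2 u ((hτnn i).trans hum.1.le) (hum.2.le.trans h3)
      nlinarith [mul_nonneg (Real.exp_pos (-u)).le (abs_nonneg (x₁ 0))]
  have h1 := hx1 T hT (le_refl _)
  have h2 := hx2 T hT (le_refl _)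
  have hA1 : |x₁ 0| ≤ Real.sqrt (x₁ 0 ^ 2 + x₂ 0 ^ 2) :=
    Real.abs_le_sqrt (by linarith [sq_nonneg (x₂ 0)])
  have hA2 : |x₂ 0| ≤ Real.sqrt (x₁ 0 ^ 2 + x₂ 0 ^ 2) :=
    Real.abs_le_sqrt (by linarith [sq_nonneg (x₁ 0)])
  have hs : Real.sqrt (x₁ T ^ 2 + x₂ T ^ 2) ≤ |x₁ T| + |x₂ T| := by
    apply Real.sqrt_le_iff.2 ⟨by positivity, ?_⟩
    nlinarith [sq_abs (x₁ T), sq_abs (x₂ T), mul_nonneg (abs_nonneg (x₁ T)) (abs_nonneg (x₂ T))]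
  have hE := (Real.exp_pos (-T)).le
  have e1 := mul_le_mul_of_nonneg_left hA1 hE
  have e2 := mul_le_mul_of_nonneg_left hA2 hE
  simp only
  nlinarith
end
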